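/- Let λ ∈ K with λ ≠ 0. Let W be another finite-dimensional K-vector space with endomorphisms B_1, …, B_n ∈ End_K(W), and let f : V → W be a K-linear map with f ∘ A_i = B_i ∘ f for all i. Then the map f^{⊕n} : V^n → W^n, (w_i)_i ↦ (f(w_i))_i, maps 𝔨_V into 𝔨_W and 𝔩_V into 𝔩_W, and hence induces a K-linear map mc_λ(f) : mc_λ(V; A) → mc_λ(W; B) satisfying mc_λ(f) ∘ mc_λ(A)_i = mc_λ(B)_i ∘ mc_λ(f) for every i. Moreover, if f is injective then mc_λ(f) is injective, and if f is surjective then mc_λ(f) is surjective. -/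

import Mathlib

/-! Dettweiler–Reiter convolution and middle convolution, in linear-algebra form.
`V^n` is modelled as `Fin n → V`. -/

/-- The Dettweiler–Reiter convolution endomorphism `c_λ(A)_i` of `V^n`, defined by
`(c_λ(A)_i w)_i = A_1 w_1 + ⋯ + A_n w_n + λ w_i` and `(c_λ(A)_i w)_k = 0` for `k ≠ i`. -/
noncomputable def cDR {K : Type*} [Field K] {V : Type*} [AddCommGroup V] [Module K V]
    {n : ℕ} (lam : K) (A : Fin n → Module.End K V) (i : Fin n) :
    Module.End K (Fin n → V) :=
  (LinearMap.single K (fun _ : Fin n => V) i).comp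
    ((∑ j, (A j).comp (LinearMap.proj j)) + lam • LinearMap.proj i)

/-- The subspace `𝔨 = {w ∈ V^n : A_i w_i = 0 for all i}`. -/
def kSub {K : Type*} [Field K] {V : Type*} [AddCommGroup V] [Module K V]
    {n : ℕ} (A : Fin n → Module.End K V) : Submodule K (Fin n → V) :=
  ⨅ i, LinearMap.ker ((A i).comp (LinearMap.proj i))

/-- The subspace `𝔩 = ⋂_{i=1}^n ker c_λ(A)_i`. -/
noncomputable def lSub {K : Type*} [Field K] {V : Type*} [AddCommGroup V] [Module K V]
    {n : ℕ} (lam : K) (A : Fin n → Module.End K V) : Submodule K (Fin n → V) :=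
  ⨅ i, LinearMap.ker (cDR lam A i)

/-- The underlying space `V^n/(𝔨 + 𝔩)` of the middle convolution `mc_λ(V; A)`. -/
noncomputable abbrev mcSpace {K : Type*} [Field K] {V : Type*} [AddCommGroup V] [Module K V]
    {n : ℕ} (lam : K) (A : Fin n → Module.End K V) :=
  (Fin n → V) ⧸ (kSub A ⊔ lSub lam A)

/-- `e` is the endomorphism `mc_λ(A)_i` of `V^n/(𝔨 + 𝔩)` induced by `c_λ(A)_i`,
characterised by `e ∘ mkQ = mkQ ∘ c_λ(A)_i`. -/
noncomputable def IsInducedEnd {K : Type*} [Field K] {V : Type*} [AddCommGroup V] [Module K V]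
    {n : ℕ} (lam : K) (A : Fin n → Module.End K V) (i : Fin n)
    (e : Module.End K (mcSpace lam A)) : Prop :=
  e.comp (kSub A ⊔ lSub lam A).mkQ = (kSub A ⊔ lSub lam A).mkQ.comp (cDR lam A i)

/-! `𝔨` and `𝔩` are cut out by equations in the vectors `c_λ(A)_i w`, and `f^{⊕n}` intertwines
`c_λ(A)_i` with `c_λ(B)_i`; this gives the induced map. For injectivity one needs
`(f^{⊕n})⁻¹(𝔨_W + 𝔩_W) = 𝔨_V + 𝔩_V`. If `λ = 0`, then `𝔨 ⊆ 𝔩` and the sum is `𝔩`. If `λ ≠ 0`, then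
`𝔨 + 𝔩` consists of the `w` with `A_i (c_λ(A)_i w)_i = 0` for all `i`: subtracting from such a `w`
the constant tuple `-λ⁻¹ ∑ⱼ Aⱼ wⱼ`, which lies in `𝔩`, leaves an element of `𝔨`. In both cases `f`
being injective makes the equations for `f^{⊕n} w` equivalent to those for `w`. -/

section Convolution

variable {K : Type*} [Field K] {V : Type*} [AddCommGroup V] [Module K V] {n : ℕ}
  {lam : K} {A : Fin n → Module.End K V} {w : Fin n → V}

theorem cDR_apply (lam : K) (A : Fin n → Module.End K V) (i : Fin n) (w : Fin n → V) :
    cDR lam A i w = Pi.single i (∑ j, A j (w j) + lam • w i) := by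
  simp [cDR]

theorem cDR_apply_self (lam : K) (A : Fin n → Module.End K V) (i : Fin n) (w : Fin n → V) :
    cDR lam A i w i = ∑ j, A j (w j) + lam • w i := by
  rw [cDR_apply, Pi.single_eq_same]

theorem mem_kSub : w ∈ kSub A ↔ ∀ i, A i (w i) = 0 := by
  simp [kSub]

theorem mem_lSub : w ∈ lSub lam A ↔ ∀ i, cDR lam A i w i = 0 := by
  simp [lSub, cDR_apply]

theorem cDR_apply_self_of_mem_kSub (hw : w ∈ kSub A) (i : Fin n) :
    cDR lam A i w i = lam • w i := by
  simp [cDR_apply_self, mem_kSub.1 hw]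

theorem kSub_le_lSub_zero (A : Fin n → Module.End K V) : kSub A ≤ lSub 0 A := fun w hw ↦
  mem_lSub.2 fun i ↦ by rw [cDR_apply_self_of_mem_kSub hw, zero_smul]

theorem apply_cDR_apply_self_of_mem_sup (hw : w ∈ kSub A ⊔ lSub lam A) (i : Fin n) :
    A i (cDR lam A i w i) = 0 := by
  obtain ⟨k, hk, l, hl, rfl⟩ := Submodule.mem_sup.1 hw
  rw [map_add, Pi.add_apply, cDR_apply_self_of_mem_kSub hk, mem_lSub.1 hl, add_zero, map_smul,
    mem_kSub.1 hk, smul_zero]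

theorem mem_kSub_sup_lSub_iff (hlam : lam ≠ 0) :
    w ∈ kSub A ⊔ lSub lam A ↔ ∀ i, A i (cDR lam A i w i) = 0 := by
  refine ⟨apply_cDR_apply_self_of_mem_sup, fun hw ↦ ?_⟩
  obtain ⟨v, hv⟩ : ∃ v : V, lam • v = -∑ j, A j (w j) :=
    ⟨-(lam⁻¹ • ∑ j, A j (w j)), by rw [smul_neg, smul_inv_smul₀ hlam]⟩
  have cDR_eq (i : Fin n) : cDR lam A i w i = lam • (w i - v) := by
    rw [cDR_apply_self, smul_sub, hv, sub_neg_eq_add, add_comm]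
  have sub_mem : w - Function.const _ v ∈ kSub A := mem_kSub.2 fun i ↦ by
    simpa [cDR_eq, hlam] using hw i
  have const_mem : Function.const _ v ∈ lSub lam A := mem_lSub.2 fun i ↦ by
    have sum_eq : ∑ j, A j v = ∑ j, A j (w j) := Finset.sum_congr rfl fun j _ ↦
      (sub_eq_zero.1 <| (map_sub (A j) _ _).symm.trans (mem_kSub.1 sub_mem j)).symm
    simp only [cDR_apply_self, Function.const_apply, sum_eq, hv, add_neg_cancel]
  exact Submodule.mem_sup.2 ⟨_, sub_mem, _, const_mem, sub_add_cancel _ _⟩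

end Convolution

section Functoriality

open LinearMap

variable {K : Type*} [Field K] {V : Type*} [AddCommGroup V] [Module K V]
  {W : Type*} [AddCommGroup W] [Module K W] {n : ℕ} (lam : K)
  {A : Fin n → Module.End K V} {B : Fin n → Module.End K W} {f : V →ₗ[K] W}
  (hf : ∀ i, f ∘ₗ A i = B i ∘ₗ f)

include hf

theorem compLeft_comp_cDR (i : Fin n) :
    f.compLeft (Fin n) ∘ₗ cDR lam A i = cDR lam B i ∘ₗ f.compLeft (Fin n) := by
  have hf_apply (j : Fin n) (v : V) : f (A j v) = B j (f v) := LinearMap.congr_fun (hf j) v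
  refine LinearMap.ext fun w ↦ funext fun k ↦ ?_
  simp [cDR_apply, Pi.apply_single (fun _ ↦ f), hf_apply]

theorem map_cDR_apply_self (i : Fin n) (w : Fin n → V) :
    f (cDR lam A i w i) = cDR lam B i (f.compLeft (Fin n) w) i :=
  congrFun (LinearMap.congr_fun (compLeft_comp_cDR lam hf i) w) i

theorem kSub_le_comap_compLeft : kSub A ≤ (kSub B).comap (f.compLeft (Fin n)) := fun w hw ↦
  mem_kSub.2 fun i ↦ by
    rw [compLeft_apply, Function.comp_apply, ← comp_apply, ← hf, comp_apply, mem_kSub.1 hw,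
      map_zero]

theorem lSub_le_comap_compLeft : lSub lam A ≤ (lSub lam B).comap (f.compLeft (Fin n)) :=
  fun w hw ↦ mem_lSub.2 fun i ↦ by
    rw [← map_cDR_apply_self lam hf, mem_lSub.1 hw, map_zero]

theorem kSub_sup_lSub_le_comap_compLeft :
    kSub A ⊔ lSub lam A ≤ (kSub B ⊔ lSub lam B).comap (f.compLeft (Fin n)) :=
  sup_le ((kSub_le_comap_compLeft hf).trans (Submodule.comap_mono le_sup_left))
    ((lSub_le_comap_compLeft lam hf).trans (Submodule.comap_mono le_sup_right))

theorem comap_compLeft_lSub (hinj : Function.Injective f) :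
    (lSub lam B).comap (f.compLeft (Fin n)) = lSub lam A := by
  ext w
  simp only [Submodule.mem_comap, mem_lSub, ← map_cDR_apply_self lam hf,
    map_eq_zero_iff f hinj]

theorem comap_compLeft_kSub_sup_lSub (hinj : Function.Injective f) :
    (kSub B ⊔ lSub lam B).comap (f.compLeft (Fin n)) = kSub A ⊔ lSub lam A := by
  obtain rfl | hlam := eq_or_ne lam 0
  · rw [sup_eq_right.2 (kSub_le_lSub_zero A), sup_eq_right.2 (kSub_le_lSub_zero B),
      comap_compLeft_lSub 0 hf hinj]
  · ext w
    simp only [Submodule.mem_comap, mem_kSub_sup_lSub_iff hlam, ← map_cDR_apply_self lam hf,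
      ← comp_apply, ← hf]
    simp only [comp_apply, map_eq_zero_iff f hinj]

/-- The map `mc_λ(f) : mc_λ(V; A) → mc_λ(W; B)` induced on the quotients by `f^{⊕n}`, which is
encoded as `f.compLeft (Fin n)`. -/
noncomputable def mcMap : mcSpace lam A →ₗ[K] mcSpace lam B :=
  Submodule.mapQ _ _ (f.compLeft (Fin n)) (kSub_sup_lSub_le_comap_compLeft lam hf)

theorem mcMap_comp_mkQ :
    mcMap lam hf ∘ₗ (kSub A ⊔ lSub lam A).mkQ =
      (kSub B ⊔ lSub lam B).mkQ ∘ₗ f.compLeft (Fin n) :=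
  Submodule.mapQ_mkQ _ _ _

theorem mcMap_comp_of_isInducedEnd {i : Fin n} {eA : Module.End K (mcSpace lam A)}
    {eB : Module.End K (mcSpace lam B)} (hA : IsInducedEnd lam A i eA)
    (hB : IsInducedEnd lam B i eB) : mcMap lam hf ∘ₗ eA = eB ∘ₗ mcMap lam hf := by
  refine Submodule.linearMap_qext _ ?_
  calc
    (mcMap lam hf ∘ₗ eA) ∘ₗ (kSub A ⊔ lSub lam A).mkQ
    _ = (mcMap lam hf ∘ₗ (kSub A ⊔ lSub lam A).mkQ) ∘ₗ cDR lam A i := by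
      rw [comp_assoc, hA, comp_assoc]
    _ = (kSub B ⊔ lSub lam B).mkQ ∘ₗ cDR lam B i ∘ₗ f.compLeft (Fin n) := by
      rw [mcMap_comp_mkQ, comp_assoc, compLeft_comp_cDR lam hf]
    _ = eB ∘ₗ (kSub B ⊔ lSub lam B).mkQ ∘ₗ f.compLeft (Fin n) := by
      rw [← comp_assoc, ← hB, comp_assoc]
    _ = (eB ∘ₗ mcMap lam hf) ∘ₗ (kSub A ⊔ lSub lam A).mkQ := by
      rw [comp_assoc, mcMap_comp_mkQ]

theorem mcMap_injective (hinj : Function.Injective f) : Function.Injective (mcMap lam hf) := by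
  rw [← ker_eq_bot, mcMap, Submodule.ker_mapQ, comap_compLeft_kSub_sup_lSub lam hf hinj,
    Submodule.mkQ_map_self]

theorem mcMap_surjective (hsurj : Function.Surjective f) :
    Function.Surjective (mcMap lam hf) := by
  refine Function.Surjective.of_comp (g := (kSub A ⊔ lSub lam A).mkQ) ?_
  rw [← coe_comp, mcMap_comp_mkQ, coe_comp]
  exact (Submodule.mkQ_surjective _).comp hsurj.comp_left

end Functoriality

theorem mc_functoriality_general
    {K : Type*} [Field K] {V : Type*} [AddCommGroup V] [Module K V]
    {W : Type*} [AddCommGroup W] [Module K W]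
    {n : ℕ} (A : Fin n → Module.End K V) (B : Fin n → Module.End K W) (lam : K)
    (f : V →ₗ[K] W) (hf : ∀ i, f.comp (A i) = (B i).comp f) :
    Submodule.map (LinearMap.pi fun i : Fin n => f.comp (LinearMap.proj i)) (kSub A) ≤
      kSub B ∧
    Submodule.map (LinearMap.pi fun i : Fin n => f.comp (LinearMap.proj i)) (lSub lam A) ≤
      lSub lam B ∧
    ∃ g : mcSpace lam A →ₗ[K] mcSpace lam B,
      g.comp (kSub A ⊔ lSub lam A).mkQ =
        ((kSub B ⊔ lSub lam B).mkQ).comp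
          (LinearMap.pi fun i : Fin n => f.comp (LinearMap.proj i)) ∧
      (∀ (i : Fin n) (eA : Module.End K (mcSpace lam A)) (eB : Module.End K (mcSpace lam B)),
        IsInducedEnd lam A i eA → IsInducedEnd lam B i eB →
          g.comp eA = eB.comp g) ∧
      (Function.Injective f → Function.Injective g) ∧
      (Function.Surjective f → Function.Surjective g) :=
  ⟨Submodule.map_le_iff_le_comap.2 (kSub_le_comap_compLeft hf),
    Submodule.map_le_iff_le_comap.2 (lSub_le_comap_compLeft lam hf),
    mcMap lam hf, mcMap_comp_mkQ lam hf,
    fun _ _ _ ↦ mcMap_comp_of_isInducedEnd lam hf, mcMap_injective lam hf,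
    mcMap_surjective lam hf⟩

/-- **functoriality of `mc_λ`, `λ ≠ 0`.** Let `f : V → W` intertwine the
tuples `A` and `B` (`f ∘ A_i = B_i ∘ f`).  Then `f^{⊕n} : V^n → W^n` maps `𝔨_V` into
`𝔨_W` and `𝔩_V` into `𝔩_W`, hence induces `mc_λ(f) : mc_λ(V; A) → mc_λ(W; B)`
intertwining the induced endomorphisms; moreover `mc_λ(f)` is injective (resp.
surjective) whenever `f` is. -/
theorem mc_functoriality
    {K : Type*} [Field K] {V : Type*} [AddCommGroup V] [Module K V] [FiniteDimensional K V]
    {W : Type*} [AddCommGroup W] [Module K W] [FiniteDimensional K W]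
    {n : ℕ} (hn : 1 ≤ n) (A : Fin n → Module.End K V) (B : Fin n → Module.End K W)
    (lam : K) (hlam : lam ≠ 0)
    (f : V →ₗ[K] W) (hf : ∀ i, f.comp (A i) = (B i).comp f) :
    Submodule.map (LinearMap.pi fun i : Fin n => f.comp (LinearMap.proj i)) (kSub A) ≤
      kSub B ∧
    Submodule.map (LinearMap.pi fun i : Fin n => f.comp (LinearMap.proj i)) (lSub lam A) ≤
      lSub lam B ∧
    ∃ g : mcSpace lam A →ₗ[K] mcSpace lam B,
      g.comp (kSub A ⊔ lSub lam A).mkQ =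
        ((kSub B ⊔ lSub lam B).mkQ).comp
          (LinearMap.pi fun i : Fin n => f.comp (LinearMap.proj i)) ∧
      (∀ (i : Fin n) (eA : Module.End K (mcSpace lam A)) (eB : Module.End K (mcSpace lam B)),
        IsInducedEnd lam A i eA → IsInducedEnd lam B i eB →
          g.comp eA = eB.comp g) ∧
      (Function.Injective f → Function.Injective g) ∧
      (Function.Surjective f → Function.Surjective g) :=
  mc_functoriality_general A B lam f hf
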